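/- Let d be a positive even integer and n = d²/2. Then in R = 𝔽₂[x]/(xⁿ−1): (1) P_{d+1}(x) is a unit, with inverse P_{d+1}(x)⁻¹ = x·(1 + x^{d+1} + x^{2(d+1)} + ⋯ + x^{(d/2−1)(d+1)}) + x^{d/2+1}·(1 + x^{d+1} + x^{2(d+1)} + ⋯ + x^{(d/2−2)(d+1)}), and wt(P_{d+1}(x)⁻¹) = d − 1; (2) P_n(x) = P_{d+1}(x)·x^{d/2+1}·(1 + x^{d+1} + x^{2(d+1)} + ⋯ + x^{(d/2−2)(d+1)}) + (1 + x + x² + ⋯ + x^{d/2}) in R, and P_n(x) = P_{d+1}(x)⁻¹·(1 + x + x² + ⋯ + x^{d/2−1}) + (1 + x^{d+1} + x^{2(d+1)} + ⋯ + x^{(d/2−1)(d+1)}) in R. -/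

import Mathlib

open Polynomial

noncomputable section

/-- `R2 n` is the ring `𝔽₂[x]/(xⁿ − 1)`. -/
abbrev R2 (n : ℕ) : Type := AdjoinRoot (X ^ n - 1 : (ZMod 2)[X])

/-- The image of `x` in `𝔽₂[x]/(xⁿ − 1)`. -/
def xR (n : ℕ) : R2 n := AdjoinRoot.root _

/-- The quotient map `𝔽₂[x] → 𝔽₂[x]/(xⁿ − 1)`. -/
def mkR (n : ℕ) : (ZMod 2)[X] →+* R2 n := AdjoinRoot.mk _

lemma xR_pow_n (n : ℕ) : xR n ^ n = 1 := by
  have h : (AdjoinRoot.mk (X ^ n - 1 : (ZMod 2)[X])) (X ^ n - 1) = 0 := AdjoinRoot.mk_self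
  rw [map_sub, map_pow, AdjoinRoot.mk_X, map_one, sub_eq_zero] at h
  exact h

/-- The unique representative of degree `< n` of an element of `𝔽₂[x]/(xⁿ − 1)` (junk if `n = 0`). -/
def repP {n : ℕ} (u : R2 n) : (ZMod 2)[X] :=
  if h : n = 0 then 0
  else AdjoinRoot.modByMonicHom (by simpa using monic_X_pow_sub_C (1 : ZMod 2) h) u

/-- The Hamming weight of an element of `𝔽₂[x]/(xⁿ − 1)`: the number of nonzero coefficients
of its degree-`< n` representative. -/
def wt {n : ℕ} (u : R2 n) : ℕ := (repP u).support.card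

/-- Coefficient of the degree-`< n` representative, indexed by `ℤ/n`. -/
def coeffZ {n : ℕ} (u : R2 n) (i : ZMod n) : ZMod 2 := (repP u).coeff i.val

/-- The X-stabilizer space `C₂(a,b) = {(r·a, r·b) : r ∈ R}` of the GB code of `(a,b)`. -/
def C2set (n : ℕ) (a b : R2 n) : Set (R2 n × R2 n) := {p | ∃ r : R2 n, p = (r * a, r * b)}

/-- The space `C₁(a,b) = {(u,v) : u·b + v·a = 0}` of the GB code of `(a,b)`. -/
def C1set (n : ℕ) (a b : R2 n) : Set (R2 n × R2 n) := {p | p.1 * b + p.2 * a = 0}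

/-- The (X-side) minimum distance of the GB code of `(a,b)`. -/
def dGB (n : ℕ) (a b : R2 n) : ℕ :=
  sInf {k | ∃ p ∈ C1set n a b \ C2set n a b, wt p.1 + wt p.2 = k}

/-- `P_m(x) = 1 + x + ⋯ + x^{m−1}` as a polynomial over `𝔽₂`. -/
def PmP (m : ℕ) : (ZMod 2)[X] := ∑ i ∈ Finset.range m, X ^ i

/-- `P_m(x) = 1 + x + ⋯ + x^{m−1}` as an element of `𝔽₂[x]/(xⁿ − 1)`. -/
def PmR (n m : ℕ) : R2 n := ∑ i ∈ Finset.range m, xR n ^ i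

/-- The ring endomorphism of `𝔽₂[x]/(xⁿ − 1)` induced by `x ↦ x^d`. -/
def substHom (n d : ℕ) : R2 n →+* R2 n :=
  AdjoinRoot.lift (algebraMap (ZMod 2) (R2 n)) (xR n ^ d) (by
    simp only [eval₂_sub, eval₂_X_pow, eval₂_one]
    rw [← pow_mul, mul_comm d n, pow_mul, xR_pow_n, one_pow, sub_self])

/-- The Euclidean inner product on `𝔽₂²ⁿ`, in terms of pairs `(u₁, u₂)` of elements of
`𝔽₂[x]/(xⁿ − 1)` (representing the concatenated binary vector `(u₁ | u₂)`). -/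
def eucInner (n : ℕ) (p q : R2 n × R2 n) : ZMod 2 :=
  ∑ i ∈ Finset.range n,
    ((repP p.1).coeff i * (repP q.1).coeff i + (repP p.2).coeff i * (repP q.2).coeff i)

/-- The symplectic inner product of `u₁ + w·u₂` and `v₁ + w·v₂`, i.e.
`Σᵢ (u₁ᵢ·v₂ᵢ + u₂ᵢ·v₁ᵢ)`, in terms of the pairs `(u₁,u₂)`, `(v₁,v₂)`. -/
def sympInner (n : ℕ) (p q : R2 n × R2 n) : ZMod 2 :=
  ∑ i ∈ Finset.range n,
    ((repP p.1).coeff i * (repP q.2).coeff i + (repP p.2).coeff i * (repP q.1).coeff i)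

/-- Euclidean dual of a set of (pairs representing) binary vectors of length `2n`. -/
def eucDual (n : ℕ) (S : Set (R2 n × R2 n)) : Set (R2 n × R2 n) :=
  {p | ∀ q ∈ S, eucInner n q p = 0}

/-- Symplectic dual of a set of (pairs representing) vectors of `𝔽₄ⁿ`. -/
def sympDual (n : ℕ) (S : Set (R2 n × R2 n)) : Set (R2 n × R2 n) :=
  {p | ∀ q ∈ S, sympInner n q p = 0}

/-- Number of nonzero `𝔽₄`-coordinates of `u₁ + w·u₂`, in terms of the pair `(u₁,u₂)`. -/
def wt4 (n : ℕ) (p : R2 n × R2 n) : ℕ := ((repP p.1).support ∪ (repP p.2).support).card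

/-- The `2n` binary coordinates of a pair `(u₁,u₂)`. -/
def coords {n : ℕ} (p : R2 n × R2 n) : (Fin n ⊕ Fin n) → ZMod 2 :=
  Sum.elim (fun i => (repP p.1).coeff i) (fun i => (repP p.2).coeff i)

/-- Vertex set of the Tanner graph: check vertices `x_t` (left) and data vertices
`q_s`, `q'_s` (right). -/
def TV (n : ℕ) : Type := (ZMod n) ⊕ ((ZMod n) ⊕ (ZMod n))

/-- `trel a b v w` holds iff `v` is a check vertex `x_t`, `w` is a data vertex, and they are
connected: `x_t ~ q_s` iff `a_{s−t} = 1`, and `x_t ~ q'_s` iff `b_{s−t} = 1`. -/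
def trel {n : ℕ} (a b : R2 n) (v w : TV n) : Prop :=
  ∃ t s : ZMod n, v = Sum.inl t ∧
    ((w = Sum.inr (Sum.inl s) ∧ coeffZ a (s - t) = 1) ∨
     (w = Sum.inr (Sum.inr s) ∧ coeffZ b (s - t) = 1))

/-- The Tanner graph `T(a,b)` of the GB code of `(a,b)`. -/
def tanner (n : ℕ) (a b : R2 n) : SimpleGraph (TV n) where
  Adj v w := trel a b v w ∨ trel a b w v
  symm := ⟨fun v w h => Or.symm h⟩
  loopless := by
    refine ⟨?_⟩
    rintro v (⟨t, s, hv, hw⟩ | ⟨t, s, hv, hw⟩) <;>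
      rcases hw with ⟨hw, -⟩ | ⟨hw, -⟩ <;> (subst hv; simp at hw)

end

noncomputable section

/-- Gluing geometric sums: `P_a(y)·(1 + y^a + ⋯ + y^{a(b−1)}) = P_{ab}(y)`. -/
lemma geom_sum_mul_geom_sum_pow {A : Type*} [CommSemiring A] (y : A) (a b : ℕ) :
    (∑ i ∈ Finset.range a, y ^ i) * ∑ i ∈ Finset.range b, y ^ (a * i) =
      ∑ i ∈ Finset.range (a * b), y ^ i := by
  induction b with
  | zero => simp
  | succ b ih =>
    rw [Finset.sum_range_succ, mul_add, ih, Nat.mul_succ, Finset.sum_range_add]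
    simp only [pow_add, ← Finset.mul_sum]
    ring

lemma geom_sum_add {A : Type*} [CommSemiring A] (y : A) (a b : ℕ) :
    ∑ i ∈ Finset.range (a + b), y ^ i =
      (∑ i ∈ Finset.range a, y ^ i) + y ^ a * ∑ i ∈ Finset.range b, y ^ i := by
  rw [Finset.sum_range_add]
  simp only [pow_add, ← Finset.mul_sum]

lemma R2_add_self {n : ℕ} (u : R2 n) : u + u = 0 := by
  have h2 : (2 : R2 n) = 0 := by
    have h : (AdjoinRoot.of (X ^ n - 1 : (ZMod 2)[X])) 2 = 0 := by
      rw [show (2 : ZMod 2) = 0 from rfl, map_zero]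
    rwa [map_ofNat] at h
  rw [← two_mul, h2, zero_mul]

lemma xR_mul_PmR_self (n : ℕ) : xR n * PmR n n = PmR n n := by
  have h := geom_sum_succ (x := xR n) (n := n)
  rw [geom_sum_succ', xR_pow_n, add_comm] at h
  exact (add_right_cancel h).symm

lemma xR_pow_mul_PmR_self (n m : ℕ) : xR n ^ m * PmR n n = PmR n n := by
  induction m with
  | zero => simp
  | succ m ih => rw [pow_succ, mul_assoc, xR_mul_PmR_self, ih]

lemma PmR_mul_PmR_self (n m : ℕ) : PmR n m * PmR n n = m • PmR n n := by
  rw [PmR, Finset.sum_mul, Finset.sum_congr rfl fun i _ => xR_pow_mul_PmR_self n i]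
  simp

/-- A sum of distinct monomials `x^i` with all `i < n` has weight the number of monomials. -/
lemma wt_sum_xR_pow {n : ℕ} (T : Finset ℕ) (hT : ∀ i ∈ T, i < n) :
    wt (∑ i ∈ T, xR n ^ i) = T.card := by
  rcases Nat.eq_zero_or_pos n with rfl | hn
  · have hT0 : T = ∅ := Finset.eq_empty_of_forall_notMem fun i hi => absurd (hT i hi) (by simp)
    subst hT0
    simp [wt, repP]
  have hmonic : (X ^ n - 1 : (ZMod 2)[X]).Monic := by
    simpa using monic_X_pow_sub_C (1 : ZMod 2) hn.ne'
  have hdeg : (X ^ n - 1 : (ZMod 2)[X]).degree = n := by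
    simpa using degree_X_pow_sub_C hn (1 : ZMod 2)
  have hmk : ∑ i ∈ T, xR n ^ i =
      AdjoinRoot.mk (X ^ n - 1 : (ZMod 2)[X]) (∑ i ∈ T, X ^ i) := by
    simp [xR]
  have hrep : repP (∑ i ∈ T, xR n ^ i) = ∑ i ∈ T, X ^ i := by
    rw [repP, dif_neg hn.ne', hmk, AdjoinRoot.modByMonicHom_mk, (modByMonic_eq_self_iff hmonic),
      hdeg]
    refine (degree_sum_le _ _).trans_lt ((Finset.sup_lt_iff (WithBot.bot_lt_coe n)).2 ?_)
    intro i hi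
    rw [degree_X_pow]
    exact WithBot.coe_lt_coe.2 (hT i hi)
  rw [wt, hrep]
  congr 1
  ext j
  simp [coeff_X_pow]

/-- For even `d > 0` and `n = d²/2` (i.e. `2n = d²`), in
`R = 𝔽₂[x]/(xⁿ−1)`:
(1) `P_{d+1}(x)` is a unit with inverse
`Q = x·(1 + x^{d+1} + ⋯ + x^{(d/2−1)(d+1)}) + x^{d/2+1}·(1 + x^{d+1} + ⋯ + x^{(d/2−2)(d+1)})`
and `wt(Q) = d − 1`;
(2) `P_n = P_{d+1}·x^{d/2+1}·(1 + x^{d+1} + ⋯ + x^{(d/2−2)(d+1)}) + (1 + x + ⋯ + x^{d/2})`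
and `P_n = P_{d+1}⁻¹·(1 + x + ⋯ + x^{d/2−1}) + (1 + x^{d+1} + ⋯ + x^{(d/2−1)(d+1)})` in `R`. -/
theorem stmt_12 (d n : ℕ) (hd : Even d) (hd0 : 0 < d) (hn : 2 * n = d ^ 2)
    (Q : R2 n)
    (hQ : Q = xR n * (∑ i ∈ Finset.range (d / 2), xR n ^ ((d + 1) * i)) +
        xR n ^ (d / 2 + 1) * (∑ i ∈ Finset.range (d / 2 - 1), xR n ^ ((d + 1) * i))) :
    (PmR n (d + 1) * Q = 1 ∧ wt Q = d - 1) ∧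
    (PmR n n = PmR n (d + 1) *
        (xR n ^ (d / 2 + 1) * ∑ i ∈ Finset.range (d / 2 - 1), xR n ^ ((d + 1) * i)) +
        ∑ i ∈ Finset.range (d / 2 + 1), xR n ^ i) ∧
    (PmR n n = Q * (∑ i ∈ Finset.range (d / 2), xR n ^ i) +
        ∑ i ∈ Finset.range (d / 2), xR n ^ ((d + 1) * i)) := by
  obtain ⟨k, rfl⟩ := hd
  have hk : (k + k) / 2 = k := by omega
  rw [hk] at hQ ⊢
  obtain ⟨l, rfl⟩ : ∃ l, k = l + 1 := ⟨k - 1, by omega⟩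
  rw [Nat.add_sub_cancel] at hQ ⊢
  have hn_add : (l + 1 + (l + 1) + 1) * (l + 1) = n + (l + 1) := by nlinarith
  have hn_sub : n = l + 1 + 1 + (l + 1 + (l + 1) + 1) * l := by nlinarith
  set S := ∑ i ∈ Finset.range (l + 1), xR n ^ ((l + 1 + (l + 1) + 1) * i) with hS
  set S' := ∑ i ∈ Finset.range l, xR n ^ ((l + 1 + (l + 1) + 1) * i) with hS'
  have hPS : PmR n (l + 1 + (l + 1) + 1) * S = PmR n n + PmR n (l + 1) := by
    rw [hS, PmR, geom_sum_mul_geom_sum_pow, hn_add, geom_sum_add, xR_pow_n, one_mul]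
    rfl
  have hPS' : PmR n n =
      PmR n (l + 1 + 1) + xR n ^ (l + 1 + 1) * (PmR n (l + 1 + (l + 1) + 1) * S') := by
    have h := geom_sum_add (xR n) (l + 1 + 1) ((l + 1 + (l + 1) + 1) * l)
    rw [← hn_sub, ← geom_sum_mul_geom_sum_pow] at h
    exact h
  have hP_succ : PmR n (l + 1 + 1) = xR n * PmR n (l + 1) + 1 := geom_sum_succ
  have hinv : PmR n (l + 1 + (l + 1) + 1) * Q = 1 := by
    rw [hQ]
    linear_combination xR n * hPS - hPS' + xR_mul_PmR_self n + hP_succ +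
      R2_add_self (xR n * PmR n (l + 1)) + R2_add_self (PmR n n) -
      R2_add_self (PmR n (l + 1 + 1))
  have hPP : PmR n (l + 1 + (l + 1) + 1) * PmR n n = PmR n n := by
    rw [PmR_mul_PmR_self, add_smul, add_smul, R2_add_self, zero_add, one_smul]
  refine ⟨⟨hinv, ?_⟩, ?_, ?_⟩
  · set T := (Finset.range (l + 1)).image fun i => 1 + (l + 1 + (l + 1) + 1) * i with hT
    set T' := (Finset.range l).image fun i => l + 1 + 1 + (l + 1 + (l + 1) + 1) * i with hT'
    have hinj (c : ℕ) : Function.Injective fun i => c + (l + 1 + (l + 1) + 1) * i := by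
      intro i j hij
      exact Nat.eq_of_mul_eq_mul_left (Nat.succ_pos _) (Nat.add_left_cancel hij)
    have hdisj : Disjoint T T' := by
      rw [Finset.disjoint_left]
      intro e he he'
      obtain ⟨i, -, rfl⟩ := Finset.mem_image.1 he
      obtain ⟨j, -, hij⟩ := Finset.mem_image.1 he'
      have hmod := congrArg (· % (l + 1 + (l + 1) + 1)) hij
      simp only [Nat.add_mul_mod_self_left] at hmod
      rw [Nat.mod_eq_of_lt (by omega), Nat.mod_eq_of_lt (by omega)] at hmod
      omega
    have hQT : Q = ∑ e ∈ T ∪ T', xR n ^ e := by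
      rw [Finset.sum_union hdisj, hT, hT', Finset.sum_image (hinj _).injOn,
        Finset.sum_image (hinj _).injOn, hQ]
      simp only [pow_add, ← Finset.mul_sum, hS, hS', pow_one]
    rw [hQT, wt_sum_xR_pow, Finset.card_union_of_disjoint hdisj,
      Finset.card_image_of_injective _ (hinj _), Finset.card_image_of_injective _ (hinj _),
      Finset.card_range, Finset.card_range]
    · omega
    · intro e he
      rcases Finset.mem_union.1 he with he | he <;>
        obtain ⟨i, hi, rfl⟩ := Finset.mem_image.1 he <;>
        rw [Finset.mem_range] at hi
      · have : (l + 1 + (l + 1) + 1) * i ≤ (l + 1 + (l + 1) + 1) * l :=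
          Nat.mul_le_mul_left _ (by omega)
        omega
      · have : (l + 1 + (l + 1) + 1) * i < (l + 1 + (l + 1) + 1) * l :=
          Nat.mul_lt_mul_of_pos_left hi (by omega)
        omega
  · change PmR n n = _ + PmR n (l + 1 + 1)
    linear_combination hPS'
  · change PmR n n = Q * PmR n (l + 1) + S
    linear_combination (PmR n n - S) * hinv + Q * hPS - Q * hPP + R2_add_self (PmR n n) -
      R2_add_self S

end
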